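/- Let θ = (1+√5)/2, θ̄ = (1−√5)/2, O_L = ℤ[i][θ], and let σ be the map σ(a + bθ) = a + bθ̄ (a, b ∈ ℤ[i]). For every nonzero β ∈ O_L, the minimum of |x₀σ(x₀) − i·x₁σ(x₁)|² over all pairs (x₀, x₁) ∈ (β·O_L)² with (x₀, x₁) ≠ (0, 0) equals |β·σ(β)|², which equals the absolute norm of the ideal β·O_L. -/

import Mathlib

noncomputable section

open Complex GaussianInt

/-- `θ = (1+√5)/2` as a complex number. -/
def thC : ℂ := (1 + Real.sqrt 5) / 2

/-- `θ̄ = (1−√5)/2` as a complex number. -/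
def thbC : ℂ := (1 - Real.sqrt 5) / 2

/-- The ring of integers `O_L = ℤ[i][θ]` of `L = ℚ(i,√5)`, realized as the subring of
`ℂ` generated by `i` and `θ`. -/
def OL : Subring ℂ := Subring.closure {Complex.I, thC}

/-- Reduction `ℤ[i] → 𝔽₅` with kernel `(2 + i)`. -/
def red5 : GaussianInt →+* ZMod 5 := Zsqrtd.lift ⟨3, by decide⟩

lemma red5_apply (x : GaussianInt) : red5 x = x.re + x.im * 3 := rfl

lemma dvd_of_red5 (x : GaussianInt) (h : red5 x = 0) : ∃ y : GaussianInt, x = ⟨2, 1⟩ * y := by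
  rw [red5_apply] at h
  have h' : ((x.re + x.im * 3 : ℤ) : ZMod 5) = 0 := by push_cast; exact h
  rw [ZMod.intCast_zmod_eq_zero_iff_dvd] at h'
  obtain ⟨k, hk⟩ := h'
  push_cast at hk
  refine ⟨⟨2 * k - x.im, x.im - k⟩, ?_⟩
  ext
  · simp; linarith
  · simp; linarith

lemma zmod5_sq : ∀ x y : ZMod 5, x * x - 3 * (y * y) = 0 → x = 0 ∧ y = 0 := by decide

lemma red5_i : red5 ⟨0, 1⟩ = 3 := by rw [red5_apply]; simp

lemma red5_pi : red5 ⟨2, 1⟩ = 0 := by rw [red5_apply]; simp; decide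

lemma red5_pib : red5 ⟨2, -1⟩ = -1 := by rw [red5_apply]; simp; decide

lemma five_eq : (5 : GaussianInt) = ⟨2, 1⟩ * ⟨2, -1⟩ := by ext <;> simp

lemma pi_ne : (⟨2, 1⟩ : GaussianInt) ≠ 0 := by
  intro h; have := congrArg Zsqrtd.im h; simp at this

lemma descent_step (a b c d : GaussianInt)
    (h : (a * a + a * b - b * b) - ⟨0, 1⟩ * (c * c + c * d - d * d) = 0) :
    red5 a = 0 ∧ red5 b = 0 ∧ red5 c = 0 ∧ red5 d = 0 := by
  have h4 : ((2 * a + b) * (2 * a + b) - ⟨0, 1⟩ * ((2 * c + d) * (2 * c + d)))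
      - 5 * (b * b - ⟨0, 1⟩ * (d * d)) = 0 := by
    linear_combination 4 * h
  rw [five_eq] at h4
  have h1 := congrArg red5 h4
  simp only [map_sub, map_mul, red5_pi, red5_i, map_zero, zero_mul, sub_zero] at h1
  obtain ⟨hu, hv⟩ := zmod5_sq _ _ h1
  obtain ⟨u, hu'⟩ := dvd_of_red5 _ hu
  obtain ⟨v, hv'⟩ := dvd_of_red5 _ hv
  rw [hu', hv'] at h4
  have h5 : (⟨2, 1⟩ : GaussianInt) * (⟨2, 1⟩ * (u * u - ⟨0, 1⟩ * (v * v))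
      - ⟨2, -1⟩ * (b * b - ⟨0, 1⟩ * (d * d))) = 0 := by
    linear_combination h4
  have h6 := (mul_eq_zero.mp h5).resolve_left pi_ne
  have h7 := congrArg red5 h6
  simp only [map_sub, map_mul, red5_pi, red5_pib, red5_i, map_zero, zero_mul, zero_sub] at h7
  obtain ⟨hb, hd⟩ := zmod5_sq (red5 b) (red5 d) (by linear_combination h7)
  have key : ∀ x : ZMod 5, 2 * x = 0 → x = 0 := by decide
  have e2 : red5 2 = 2 := map_ofNat red5 2
  refine ⟨key _ ?_, hb, key _ ?_, hd⟩
  · rw [map_add, map_mul, hb, add_zero, e2] at hu; exact hu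
  · rw [map_add, map_mul, hd, add_zero, e2] at hv; exact hv

lemma norm_pi_mul (x : GaussianInt) : (⟨2, 1⟩ * x : GaussianInt).norm = 5 * x.norm := by
  rw [Zsqrtd.norm_mul]; rfl

/-- `i` is not a relative norm: the form is anisotropic. -/
lemma aniso (n : ℕ) : ∀ (a b c d : GaussianInt),
    a.norm + b.norm + c.norm + d.norm ≤ n →
    (a * a + a * b - b * b) - ⟨0, 1⟩ * (c * c + c * d - d * d) = 0 →
    a = 0 ∧ b = 0 ∧ c = 0 ∧ d = 0 := by
  induction n using Nat.strong_induction_on with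
  | _ n ih =>
  intro a b c d hn h
  obtain ⟨ha, hb, hc, hd⟩ := descent_step a b c d h
  obtain ⟨a', rfl⟩ := dvd_of_red5 _ ha
  obtain ⟨b', rfl⟩ := dvd_of_red5 _ hb
  obtain ⟨c', rfl⟩ := dvd_of_red5 _ hc
  obtain ⟨d', rfl⟩ := dvd_of_red5 _ hd
  have h' : (a' * a' + a' * b' - b' * b') - ⟨0, 1⟩ * (c' * c' + c' * d' - d' * d') = 0 := by
    have h5 : (⟨2, 1⟩ : GaussianInt) * (⟨2, 1⟩ *
      ((a' * a' + a' * b' - b' * b') - ⟨0, 1⟩ * (c' * c' + c' * d' - d' * d'))) = 0 := by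
      linear_combination h
    exact (mul_eq_zero.mp ((mul_eq_zero.mp h5).resolve_left pi_ne)).resolve_left pi_ne
  simp only [norm_pi_mul] at hn
  have ha0 := GaussianInt.norm_nonneg a'
  have hb0 := GaussianInt.norm_nonneg b'
  have hc0 := GaussianInt.norm_nonneg c'
  have hd0 := GaussianInt.norm_nonneg d'
  have fin : a' = 0 ∧ b' = 0 ∧ c' = 0 ∧ d' = 0 := by
    by_cases hz : a'.norm + b'.norm + c'.norm + d'.norm = 0
    · refine ⟨?_, ?_, ?_, ?_⟩ <;> apply GaussianInt.norm_eq_zero.mp <;> omega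
    · refine ih (a'.norm + b'.norm + c'.norm + d'.norm).toNat (by omega) a' b' c' d'
        (by omega) h'
  obtain ⟨rfl, rfl, rfl, rfl⟩ := fin
  simp

lemma aniso' (a b c d : GaussianInt)
    (h : (a * a + a * b - b * b) - ⟨0, 1⟩ * (c * c + c * d - d * d) = 0) :
    a = 0 ∧ b = 0 ∧ c = 0 ∧ d = 0 :=
  aniso (a.norm + b.norm + c.norm + d.norm).toNat a b c d (Int.self_le_toNat _) h

lemma aniso2 (a b : GaussianInt) (h : a * a + a * b - b * b = 0) : a = 0 ∧ b = 0 := by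
  obtain ⟨h1, h2, -⟩ := aniso' a b 0 0 (by rw [h]; simp)
  exact ⟨h1, h2⟩

lemma sqrt5_sq : ((Real.sqrt 5 : ℝ) : ℂ) * (Real.sqrt 5 : ℝ) = 5 := by
  rw [← Complex.ofReal_mul, Real.mul_self_sqrt (by norm_num)]; norm_num

lemma thC_sq : thC * thC = 1 + thC := by
  unfold thC; linear_combination (1 / 4) * sqrt5_sq

lemma relnorm (a b : GaussianInt) :
    (toComplex a + toComplex b * thC) * (toComplex a + toComplex b * thbC)
      = toComplex (a * a + a * b - b * b) := by
  simp only [map_sub, map_add, map_mul]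
  unfold thC thbC
  linear_combination (-1 / 4) * toComplex b * toComplex b * sqrt5_sq

lemma toComplex_I : toComplex ⟨0, 1⟩ = Complex.I := by simp [toComplex_def]

lemma gauss_norm_det (p q : GaussianInt) :
    (p * p + p * q - q * q).norm = Matrix.det
      !![p.re, -p.im, q.re, -q.im;
         p.im, p.re, q.im, q.re;
         q.re, -q.im, p.re + q.re, -(p.im + q.im);
         q.im, q.re, p.im + q.im, p.re + q.re] := by
  simp [Zsqrtd.norm_def, Matrix.det_succ_row_zero, Fin.sum_univ_succ, Fin.succAbove]
  ring

def iGen : OL := ⟨Complex.I, Subring.subset_closure (by simp)⟩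
def tGen : OL := ⟨thC, Subring.subset_closure (by simp)⟩

lemma iGen_sq : iGen * iGen = -1 := Subtype.ext (by simp [iGen])
lemma tGen_sq : tGen * tGen = 1 + tGen := Subtype.ext (by simp [tGen, thC_sq])

def fOL : (Fin 4 → ℤ) →ₗ[ℤ] OL := AddMonoidHom.toIntLinearMap
  { toFun := fun v => (v 0 : OL) + (v 1 : OL) * iGen + ((v 2 : OL) + (v 3 : OL) * iGen) * tGen
    map_zero' := by simp
    map_add' := fun v w => by simp; ring }

lemma fOL_apply (v : Fin 4 → ℤ) :
    fOL v = (v 0 : OL) + (v 1 : OL) * iGen + ((v 2 : OL) + (v 3 : OL) * iGen) * tGen := rfl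

lemma fOL_coe (v : Fin 4 → ℤ) : ((fOL v : OL) : ℂ) =
    toComplex ⟨v 0, v 1⟩ + toComplex ⟨v 2, v 3⟩ * thC := by
  rw [fOL_apply]; simp [toComplex_def, iGen, tGen]

lemma fOL_inj : Function.Injective fOL := by
  rw [← LinearMap.ker_eq_bot, LinearMap.ker_eq_bot']
  intro v hv
  have h : ((fOL v : OL) : ℂ) = 0 := by rw [hv]; rfl
  rw [fOL_coe] at h
  have h2 := relnorm ⟨v 0, v 1⟩ ⟨v 2, v 3⟩
  rw [h, zero_mul] at h2
  obtain ⟨h3, h4⟩ := aniso2 _ _ (GaussianInt.toComplex_eq_zero.mp h2.symm)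
  have e0 := congrArg Zsqrtd.re h3
  have e1 := congrArg Zsqrtd.im h3
  have e2 := congrArg Zsqrtd.re h4
  have e3 := congrArg Zsqrtd.im h4
  ext i; fin_cases i
  · exact e0
  · exact e1
  · exact e2
  · exact e3

lemma exists_gauss (z : ℂ) (hz : z ∈ OL) :
    ∃ a b : GaussianInt, z = toComplex a + toComplex b * thC := by
  unfold OL at hz
  induction hz using Subring.closure_induction with
  | mem x hx =>
    rcases hx with rfl | hx
    · exact ⟨⟨0, 1⟩, 0, by simp [toComplex_I]⟩
    · rw [Set.mem_singleton_iff] at hx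
      exact ⟨0, 1, by simp [hx]⟩
  | zero => exact ⟨0, 0, by simp⟩
  | one => exact ⟨1, 0, by simp⟩
  | add x y _ _ hx hy =>
    obtain ⟨a, b, rfl⟩ := hx
    obtain ⟨c, d, rfl⟩ := hy
    exact ⟨a + c, b + d, by simp only [map_add]; ring⟩
  | neg x _ hx =>
    obtain ⟨a, b, rfl⟩ := hx
    exact ⟨-a, -b, by simp only [map_neg]; ring⟩
  | mul x y _ _ hx hy =>
    obtain ⟨a, b, rfl⟩ := hx
    obtain ⟨c, d, rfl⟩ := hy
    refine ⟨a * c + b * d, a * d + b * c + b * d, ?_⟩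
    simp only [map_add, map_mul]
    linear_combination toComplex b * toComplex d * thC_sq

lemma fOL_surj : Function.Surjective fOL := by
  intro z
  obtain ⟨a, b, h⟩ := exists_gauss z z.2
  refine ⟨![a.re, a.im, b.re, b.im], Subtype.ext ?_⟩
  rw [fOL_coe, h]; rfl

def eOL : (Fin 4 → ℤ) ≃ₗ[ℤ] OL := LinearEquiv.ofBijective fOL ⟨fOL_inj, fOL_surj⟩

lemma eOL_apply (v : Fin 4 → ℤ) :
    eOL v = (v 0 : OL) + (v 1 : OL) * iGen + ((v 2 : OL) + (v 3 : OL) * iGen) * tGen := rfl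

def bOL : Module.Basis (Fin 4) ℤ OL := Module.Basis.ofEquivFun eOL.symm

lemma card_quot {R ι : Type*} [CommRing R] [IsDomain R] [Fintype ι] [DecidableEq ι]
    (b : Module.Basis ι ℤ R) (x : R) (hx : x ≠ 0) :
    Nat.card (R ⧸ Ideal.span {x}) = (Algebra.leftMulMatrix b x).det.natAbs := by
  have : Module.Free ℤ R := Module.Free.of_basis b
  have : Module.Finite ℤ R := Module.Finite.of_basis b
  let N : Submodule ℤ R := (Ideal.span {x}).restrictScalars ℤ
  let g : R →ₗ[ℤ] N := LinearMap.codRestrict N (LinearMap.mulLeft ℤ x)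
    (fun y => Ideal.mem_span_singleton.mpr (dvd_mul_right x y))
  have hg : Function.Bijective g := by
    constructor
    · intro y z h
      have := congrArg Subtype.val h
      exact mul_left_cancel₀ hx this
    · rintro ⟨y, hy⟩
      obtain ⟨c, rfl⟩ := Ideal.mem_span_singleton.mp hy
      exact ⟨c, rfl⟩
  have h := Submodule.natAbs_det_equiv N (LinearEquiv.ofBijective g hg)
  have e : Nat.card (R ⧸ Ideal.span {x}) = Nat.card (R ⧸ N) := rfl
  rw [e, ← h, ← LinearMap.det_toMatrix b]
  rfl

lemma leftMul_eq (p q : GaussianInt) (x : OL)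
    (hx : x = eOL ![p.re, p.im, q.re, q.im]) : Algebra.leftMulMatrix bOL x =
      !![p.re, -p.im, q.re, -q.im;
         p.im, p.re, q.im, q.re;
         q.re, -q.im, p.re + q.re, -(p.im + q.im);
         q.im, q.re, p.im + q.im, p.re + q.re] := by
  have h : ∀ (j : Fin 4) (v : Fin 4 → ℤ), x * bOL j = eOL v →
      ∀ i, Algebra.leftMulMatrix bOL x i j = v i := by
    intro j v hv i
    rw [Algebra.leftMulMatrix_eq_repr_mul, hv]
    simp [bOL]
  have hb : ∀ j, bOL j = eOL (Pi.single j 1) := by intro j; simp [bOL]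
  have h0 := h 0 ![p.re, p.im, q.re, q.im] (by
    rw [hb, hx]; simp [eOL_apply])
  have h1 := h 1 ![-p.im, p.re, -q.im, q.re] (by
    rw [hb, hx]; simp [eOL_apply]
    linear_combination ((p.im : OL) + q.im * tGen) * iGen_sq)
  have h2 := h 2 ![q.re, q.im, p.re + q.re, p.im + q.im] (by
    rw [hb, hx]; simp [eOL_apply]
    linear_combination ((q.re : OL) + q.im * iGen) * tGen_sq)
  have h3 := h 3 ![-q.im, q.re, -(p.im + q.im), p.re + q.re] (by
    rw [hb, hx]; simp [eOL_apply]
    linear_combination ((q.re : OL) + q.im * iGen) * iGen * tGen_sq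
      + ((p.im : OL) * tGen + q.im * (1 + tGen)) * iGen_sq)
  ext i j
  fin_cases j
  · exact (h0 i).trans (by fin_cases i <;> rfl)
  · exact (h1 i).trans (by fin_cases i <;> rfl)
  · exact (h2 i).trans (by fin_cases i <;> rfl)
  · exact (h3 i).trans (by fin_cases i <;> rfl)

/-- For a nonzero `β = p + qθ ∈ O_L = ℤ[i][θ]` (with `p, q` Gaussian integers, and
`σ(β) = p + qθ̄`), the minimum of `|x₀σ(x₀) − i·x₁σ(x₁)|²` over all pairs
`(x₀, x₁) ∈ (β·O_L)² \ {(0,0)}` equals `|β·σ(β)|²`, which equals the absolute norm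
`N(β·O_L) = |O_L/β·O_L|` of the ideal `β·O_L`. -/
theorem stmt6 (p q : GaussianInt) (hpq : ¬(p = 0 ∧ q = 0))
    (hmem : toComplex p + toComplex q * thC ∈ OL) :
    IsLeast { r : ℝ | ∃ a b c d : GaussianInt, ¬(a = 0 ∧ b = 0 ∧ c = 0 ∧ d = 0) ∧
      r = Complex.normSq
        (((toComplex p + toComplex q * thC) * (toComplex a + toComplex b * thC))
            * ((toComplex p + toComplex q * thbC) * (toComplex a + toComplex b * thbC))
          - Complex.I *
            (((toComplex p + toComplex q * thC) * (toComplex c + toComplex d * thC))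
              * ((toComplex p + toComplex q * thbC) * (toComplex c + toComplex d * thbC)))) }
      (Complex.normSq
        ((toComplex p + toComplex q * thC) * (toComplex p + toComplex q * thbC))) ∧
    Complex.normSq ((toComplex p + toComplex q * thC) * (toComplex p + toComplex q * thbC))
      = (Nat.card
          (↥OL ⧸ Ideal.span {(⟨toComplex p + toComplex q * thC, hmem⟩ : OL)}) : ℝ) := by
  have hN : p * p + p * q - q * q ≠ 0 := fun h => hpq (aniso2 p q h)
  refine ⟨⟨⟨1, 0, 0, 0, by simp, by simp⟩, ?_⟩, ?_⟩
  · rintro r ⟨a, b, c, d, hne, rfl⟩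
    have e : ((toComplex p + toComplex q * thC) * (toComplex a + toComplex b * thC))
            * ((toComplex p + toComplex q * thbC) * (toComplex a + toComplex b * thbC))
          - Complex.I *
            (((toComplex p + toComplex q * thC) * (toComplex c + toComplex d * thC))
              * ((toComplex p + toComplex q * thbC) * (toComplex c + toComplex d * thbC)))
        = toComplex (p * p + p * q - q * q) *
          toComplex ((a * a + a * b - b * b) - ⟨0, 1⟩ * (c * c + c * d - d * d)) := by
      rw [map_sub toComplex (a * a + a * b - b * b), map_mul toComplex ⟨0, 1⟩, toComplex_I,
        ← relnorm, ← relnorm, ← relnorm]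
      ring
    rw [e, relnorm, Complex.normSq_mul]
    refine le_mul_of_one_le_right (Complex.normSq_nonneg _) ?_
    rw [← GaussianInt.intCast_real_norm]
    have : 0 < ((a * a + a * b - b * b) - ⟨0, 1⟩ * (c * c + c * d - d * d) : GaussianInt).norm :=
      GaussianInt.norm_pos.mpr (fun h => hne (aniso' a b c d h))
    exact_mod_cast this
  · have hx : (⟨toComplex p + toComplex q * thC, hmem⟩ : OL) = eOL ![p.re, p.im, q.re, q.im] :=
      Subtype.ext (fOL_coe ![p.re, p.im, q.re, q.im]).symm
    have hx0 : (⟨toComplex p + toComplex q * thC, hmem⟩ : OL) ≠ 0 := by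
      intro h
      have h' : toComplex p + toComplex q * thC = 0 := congrArg Subtype.val h
      have h2 := relnorm p q
      rw [h', zero_mul] at h2
      exact hN (GaussianInt.toComplex_eq_zero.mp h2.symm)
    rw [card_quot bOL _ hx0, leftMul_eq p q _ hx, ← gauss_norm_det, relnorm,
      GaussianInt.natCast_natAbs_norm, ← GaussianInt.intCast_real_norm]
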